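/- arXiv:math/0102035 — 6 statements merged into one kernel-verified Lean document; each statement's English description precedes it below -/
import Mathlib

section
/- Let θ₁, θ₂, θ₃ ∈ [0, π] be real numbers such that cos²θ₁ + cos²θ₂ + cos²θ₃ + 2·cosθ₁·cosθ₂·cosθ₃ ≤ 1. Then θ₁ + θ₂ + θ₃ ≥ π. -/
/-!
The excess of the cosine expression over `1` factors as
`(cos z + cos (x + y)) * (cos z + cos (x - y))`. If `|x| + |y| + |z| < π`, then both `|z| + |x + y|`
and `|z| + |x - y|` are below `π`, so both factors are positive and the expression exceeds `1`.
-/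

open Real

theorem cos_add_cos_pos_of_abs_add_abs_lt_pi {x y : ℝ} (h : |x| + |y| < π) :
    0 < cos x + cos y := by
  have h_cos : cos (π - |y|) < cos |x| :=
    cos_lt_cos_of_nonneg_of_le_pi (abs_nonneg x) (by linarith [abs_nonneg y]) (by linarith)
  rw [cos_pi_sub, cos_abs, cos_abs] at h_cos
  linarith

theorem cos_add_cos_add_mul_cos_add_cos_sub (x y z : ℝ) :
    (cos z + cos (x + y)) * (cos z + cos (x - y)) =
      cos x ^ 2 + cos y ^ 2 + cos z ^ 2 + 2 * cos x * cos y * cos z - 1 := by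
  have h_sin : sin x ^ 2 * sin y ^ 2 = (1 - cos x ^ 2) * (1 - cos y ^ 2) := by
    rw [sin_sq, sin_sq]
  rw [cos_add, cos_sub]
  linear_combination -h_sin

theorem angle_sum_ge_pi_general (x y z : ℝ)
    (h : cos x ^ 2 + cos y ^ 2 + cos z ^ 2 + 2 * cos x * cos y * cos z ≤ 1) :
    π ≤ |x| + |y| + |z| := by
  by_contra! h_lt
  have h_add : 0 < cos z + cos (x + y) :=
    cos_add_cos_pos_of_abs_add_abs_lt_pi (by linarith [abs_add_le x y])
  have h_sub : 0 < cos z + cos (x - y) :=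
    cos_add_cos_pos_of_abs_add_abs_lt_pi (by linarith [abs_sub x y])
  have h_mul := mul_pos h_add h_sub
  rw [cos_add_cos_add_mul_cos_add_cos_sub] at h_mul
  linarith

theorem angle_sum_ge_pi (θ₁ θ₂ θ₃ : ℝ)
    (h₁ : θ₁ ∈ Set.Icc 0 Real.pi) (h₂ : θ₂ ∈ Set.Icc 0 Real.pi)
    (h₃ : θ₃ ∈ Set.Icc 0 Real.pi)
    (h : Real.cos θ₁ ^ 2 + Real.cos θ₂ ^ 2 + Real.cos θ₃ ^ 2 +
      2 * Real.cos θ₁ * Real.cos θ₂ * Real.cos θ₃ ≤ 1) :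
    θ₁ + θ₂ + θ₃ ≥ Real.pi := by
  simpa only [abs_of_nonneg h₁.1, abs_of_nonneg h₂.1, abs_of_nonneg h₃.1] using
    angle_sum_ge_pi_general θ₁ θ₂ θ₃ h
end

section
/- Let θ₁, θ₂, θ₃ ∈ [0, π] be real numbers such that cos²θ₁ + cos²θ₂ + cos²θ₃ + 2·cosθ₁·cosθ₂·cosθ₃ ≤ 1. Then θ₂ − θ₁ ≤ π − θ₃. -/
/-!
The quantity `1 - cos² θ₁ - cos² θ₂ - cos² θ₃ - 2 cos θ₁ cos θ₂ cos θ₃` is the determinant of the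
Gram matrix that three unit vectors at pairwise angles `θ₁`, `θ₂` and `π - θ₃` would have, so the
claim is a triangle inequality for angles. Completing the square in `cos θ₃` shows that the
determinant is nonnegative exactly when `cos (π - θ₃)` lies between `cos (θ₁ + θ₂)` and
`cos (θ₁ - θ₂)`.
-/

open Real Set

lemma le_of_cos_le_cos {x y : ℝ} (hx : x ≤ π) (hy : 0 ≤ y) (h : cos y ≤ cos x) : x ≤ y :=
  le_of_not_gt fun hyx ↦ (cos_lt_cos_of_nonneg_of_le_pi hy hx hyx).not_ge h

lemma cos_sq_add_cos_sq_add_sq_le_one_iff {x y : ℝ} (c : ℝ) (hxy : 0 ≤ sin x * sin y) :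
    cos x ^ 2 + cos y ^ 2 + c ^ 2 + 2 * cos x * cos y * c ≤ 1 ↔
      -c ∈ Icc (cos (x + y)) (cos (x - y)) := by
  have complete_square : (sin x * sin y) ^ 2 - (c + cos x * cos y) ^ 2 =
      1 - (cos x ^ 2 + cos y ^ 2 + c ^ 2 + 2 * cos x * cos y * c) := by
    rw [mul_pow, sin_sq, sin_sq]
    ring
  rw [← sub_nonneg, ← complete_square, sub_nonneg, sq_le_sq, abs_of_nonneg hxy, abs_le, mem_Icc,
    cos_add, cos_sub]
  constructor <;> rintro ⟨hl, hu⟩ <;> constructor <;> linarith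

theorem angle_diff_le (θ₁ θ₂ θ₃ : ℝ)
    (h₁ : θ₁ ∈ Set.Icc 0 Real.pi) (h₂ : θ₂ ∈ Set.Icc 0 Real.pi)
    (h₃ : θ₃ ∈ Set.Icc 0 Real.pi)
    (h : Real.cos θ₁ ^ 2 + Real.cos θ₂ ^ 2 + Real.cos θ₃ ^ 2 +
      2 * Real.cos θ₁ * Real.cos θ₂ * Real.cos θ₃ ≤ 1) :
    θ₂ - θ₁ ≤ Real.pi - θ₃ := by
  have sin_mul_sin_nonneg : 0 ≤ sin θ₁ * sin θ₂ :=
    mul_nonneg (sin_nonneg_of_mem_Icc h₁) (sin_nonneg_of_mem_Icc h₂)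
  have cos_le : cos (π - θ₃) ≤ cos (θ₂ - θ₁) := by
    rw [cos_pi_sub, ← neg_sub θ₁ θ₂, cos_neg]
    exact ((cos_sq_add_cos_sq_add_sq_le_one_iff _ sin_mul_sin_nonneg).mp h).2
  have sub_le_pi : θ₂ - θ₁ ≤ π := (sub_le_self θ₂ h₁.1).trans h₂.2
  exact le_of_cos_le_cos sub_le_pi (sub_nonneg.mpr h₃.2) cos_le
end

section
/- Let a₁, a₂, a₃ be matrices in SU(2) with a₁·a₂·a₃ = id. Then cos²(θ(a₁)/2) + cos²(θ(a₂)/2) + cos²(θ(a₃)/2) + 2·cos(θ(a₁)/2)·cos(θ(a₂)/2)·cos(θ(a₃)/2) ≤ 1. Equivalently, writing tⱼ := Re(tr aⱼ), one has t₁² + t₂² + t₃² − t₁·t₂·t₃ ≤ 4. -/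
/-- The rotation angle of a matrix in `SU(2)`: `θ(a) = 2 · arccos(−Re(tr a)/2)`. -/
noncomputable def rotationAngle (a : Matrix.specialUnitaryGroup (Fin 2) ℂ) : ℝ :=
  2 * Real.arccos (-(Matrix.trace (a : Matrix (Fin 2) (Fin 2) ℂ)).re / 2)

/-!
Since `cos (θ(aⱼ) / 2) = -tⱼ / 2`, the two inequalities agree up to a factor `4`. By the Fricke
identity, `t₁² + t₂² + t₃² - t₁t₂t₃ - 2` is the trace of the commutator of `a₁` and `a₂`, because
`a₁a₂ = a₃⁻¹` has trace `t₃`. A commutator is again in `SU(2)`, so its trace is at most `2`.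
-/

section FrickeIdentity

variable {R : Type*} [CommRing R]

theorem add_adjugate_fin_two (A : Matrix (Fin 2) (Fin 2) R) :
    A + A.adjugate = A.trace • 1 := by
  rw [Matrix.adjugate_fin_two, Matrix.trace_fin_two]
  ext i j
  fin_cases i <;> fin_cases j <;> simp [add_comm]

theorem trace_mul_add_trace_mul_adjugate_fin_two (A B : Matrix (Fin 2) (Fin 2) R) :
    (A * B).trace + (A * B.adjugate).trace = A.trace * B.trace := by
  rw [← Matrix.trace_add, ← mul_add, add_adjugate_fin_two, Matrix.mul_smul, mul_one,
    Matrix.trace_smul, smul_eq_mul, mul_comm]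

theorem trace_adjugate_fin_two (A : Matrix (Fin 2) (Fin 2) R) :
    A.adjugate.trace = A.trace := by
  rw [Matrix.adjugate_fin_two, Matrix.trace_fin_two_of, Matrix.trace_fin_two, add_comm]

theorem trace_mul_self_fin_two (A : Matrix (Fin 2) (Fin 2) R) :
    (A * A).trace = A.trace ^ 2 - 2 * A.det := by
  have h_skein := trace_mul_add_trace_mul_adjugate_fin_two A A
  rw [Matrix.mul_adjugate, Matrix.trace_smul, Matrix.trace_one, Fintype.card_fin,
    smul_eq_mul] at h_skein
  linear_combination h_skein

theorem trace_mul_mul_adjugate_mul_adjugate_fin_two (A B : Matrix (Fin 2) (Fin 2) R) :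
    (A * B * A.adjugate * B.adjugate).trace =
      B.det * A.trace ^ 2 + A.det * B.trace ^ 2 + (A * B).trace ^ 2 -
        A.trace * B.trace * (A * B).trace - 2 * A.det * B.det := by
  have h_conj : (A * B * A.adjugate).trace = A.det * B.trace := by
    rw [Matrix.trace_mul_cycle, Matrix.adjugate_mul, Matrix.smul_mul, one_mul,
      Matrix.trace_smul, smul_eq_mul]
  have h_adjugate_mul : (A.adjugate * B).trace = A.trace * B.trace - (A * B).trace := by
    rw [Matrix.trace_mul_comm A.adjugate, Matrix.trace_mul_comm A, mul_comm A.trace]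
    linear_combination trace_mul_add_trace_mul_adjugate_fin_two B A
  have h_cancel : (A * B * (A.adjugate * B).adjugate).trace =
      B.det * (A.trace ^ 2 - 2 * A.det) := by
    rw [Matrix.adjugate_mul_distrib, Matrix.adjugate_adjugate _ (by simp), Fintype.card_fin,
      mul_assoc, ← mul_assoc B, Matrix.mul_adjugate]
    simp [trace_mul_self_fin_two]
  have h_split_B := trace_mul_add_trace_mul_adjugate_fin_two (A * B * A.adjugate) B
  have h_split_mul := trace_mul_add_trace_mul_adjugate_fin_two (A * B) (A.adjugate * B)
  rw [← mul_assoc] at h_split_mul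
  rw [h_conj] at h_split_B
  rw [h_cancel, h_adjugate_mul] at h_split_mul
  linear_combination h_split_B - h_split_mul

end FrickeIdentity

section SpecialUnitary

open scoped commutatorElement

variable {R : Type*} [CommRing R] [StarRing R]

theorem coe_inv_specialUnitaryGroup {n : Type*} [Fintype n] [DecidableEq n]
    (a : Matrix.specialUnitaryGroup n R) : a⁻¹.1 = a.1.adjugate := by
  obtain ⟨h_unitary, h_det⟩ := Matrix.mem_specialUnitaryGroup_iff.mp a.2
  refine left_inv_eq_right_inv (Matrix.mem_unitaryGroup_iff'.mp h_unitary) ?_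
  rw [Matrix.mul_adjugate, h_det, one_smul]

theorem trace_inv_specialUnitaryGroup_fin_two (a : Matrix.specialUnitaryGroup (Fin 2) R) :
    a⁻¹.1.trace = a.1.trace := by
  rw [coe_inv_specialUnitaryGroup, trace_adjugate_fin_two]

theorem star_trace_specialUnitaryGroup_fin_two (a : Matrix.specialUnitaryGroup (Fin 2) R) :
    star a.1.trace = a.1.trace := by
  rw [← Matrix.trace_conjTranspose]
  exact trace_inv_specialUnitaryGroup_fin_two a

theorem trace_commutator_specialUnitaryGroup_fin_two
    (a b : Matrix.specialUnitaryGroup (Fin 2) R) :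
    ⁅a, b⁆.1.trace =
      a.1.trace ^ 2 + b.1.trace ^ 2 + (a * b).1.trace ^ 2 -
        a.1.trace * b.1.trace * (a * b).1.trace - 2 := by
  have h_det_a := (Matrix.mem_specialUnitaryGroup_iff.mp a.2).2
  have h_det_b := (Matrix.mem_specialUnitaryGroup_iff.mp b.2).2
  simp only [commutatorElement_def, Submonoid.coe_mul, coe_inv_specialUnitaryGroup,
    trace_mul_mul_adjugate_mul_adjugate_fin_two, h_det_a, h_det_b, one_mul, mul_one]

end SpecialUnitary

section TraceBounds

open scoped commutatorElement

variable {𝕜 : Type*} [RCLike 𝕜]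

theorem norm_trace_le_card_of_mem_unitaryGroup {n : Type*} [Fintype n] [DecidableEq n]
    {U : Matrix n n 𝕜} (hU : U ∈ Matrix.unitaryGroup n 𝕜) : ‖U.trace‖ ≤ Fintype.card n :=
  calc
    ‖U.trace‖ ≤ ∑ i, ‖U i i‖ := norm_sum_le _ _
    _ ≤ ∑ _i : n, (1 : ℝ) := Finset.sum_le_sum fun i _ ↦ entry_norm_bound_of_unitary hU i i
    _ = Fintype.card n := by simp

theorem abs_re_trace_le_card_of_mem_unitaryGroup {n : Type*} [Fintype n] [DecidableEq n]
    {U : Matrix n n 𝕜} (hU : U ∈ Matrix.unitaryGroup n 𝕜) :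
    |RCLike.re U.trace| ≤ Fintype.card n :=
  (RCLike.abs_re_le_norm _).trans (norm_trace_le_card_of_mem_unitaryGroup hU)

theorem abs_re_trace_specialUnitaryGroup_fin_two_le (a : Matrix.specialUnitaryGroup (Fin 2) 𝕜) :
    |RCLike.re a.1.trace| ≤ 2 := by
  simpa using abs_re_trace_le_card_of_mem_unitaryGroup
    (Matrix.specialUnitaryGroup_le_unitaryGroup a.2)

theorem ofReal_re_trace_specialUnitaryGroup_fin_two (a : Matrix.specialUnitaryGroup (Fin 2) 𝕜) :
    (RCLike.re a.1.trace : 𝕜) = a.1.trace :=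
  RCLike.conj_eq_iff_re.mp (star_trace_specialUnitaryGroup_fin_two a)

theorem re_trace_commutator_specialUnitaryGroup_fin_two
    (a b : Matrix.specialUnitaryGroup (Fin 2) 𝕜) :
    RCLike.re ⁅a, b⁆.1.trace =
      RCLike.re a.1.trace ^ 2 + RCLike.re b.1.trace ^ 2 + RCLike.re (a * b).1.trace ^ 2 -
        RCLike.re a.1.trace * RCLike.re b.1.trace * RCLike.re (a * b).1.trace - 2 := by
  have h_fricke := trace_commutator_specialUnitaryGroup_fin_two a b
  rw [← ofReal_re_trace_specialUnitaryGroup_fin_two a,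
    ← ofReal_re_trace_specialUnitaryGroup_fin_two b,
    ← ofReal_re_trace_specialUnitaryGroup_fin_two (a * b),
    ← ofReal_re_trace_specialUnitaryGroup_fin_two ⁅a, b⁆] at h_fricke
  exact_mod_cast h_fricke

theorem sum_re_trace_sq_sub_prod_re_trace_le_four (a b : Matrix.specialUnitaryGroup (Fin 2) 𝕜) :
    RCLike.re a.1.trace ^ 2 + RCLike.re b.1.trace ^ 2 + RCLike.re (a * b).1.trace ^ 2 -
      RCLike.re a.1.trace * RCLike.re b.1.trace * RCLike.re (a * b).1.trace ≤ 4 := by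
  have h_commutator_le : RCLike.re ⁅a, b⁆.1.trace ≤ 2 :=
    le_of_abs_le (abs_re_trace_specialUnitaryGroup_fin_two_le ⁅a, b⁆)
  linarith [re_trace_commutator_specialUnitaryGroup_fin_two a b]

end TraceBounds

theorem cos_rotationAngle_div_two (a : Matrix.specialUnitaryGroup (Fin 2) ℂ) :
    Real.cos (rotationAngle a / 2) = -a.1.trace.re / 2 := by
  obtain ⟨h_lower, h_upper⟩ : -2 ≤ a.1.trace.re ∧ a.1.trace.re ≤ 2 :=
    abs_le.mp (abs_re_trace_specialUnitaryGroup_fin_two_le a)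
  rw [rotationAngle, mul_div_cancel_left₀ _ two_ne_zero, Real.cos_arccos] <;> linarith

theorem su2_triple_product_inequality
    (a₁ a₂ a₃ : Matrix.specialUnitaryGroup (Fin 2) ℂ)
    (h : a₁ * a₂ * a₃ = 1) :
    Real.cos (rotationAngle a₁ / 2) ^ 2 + Real.cos (rotationAngle a₂ / 2) ^ 2 +
        Real.cos (rotationAngle a₃ / 2) ^ 2 +
        2 * Real.cos (rotationAngle a₁ / 2) * Real.cos (rotationAngle a₂ / 2) *
          Real.cos (rotationAngle a₃ / 2) ≤ 1 ∧
    (Matrix.trace (a₁ : Matrix (Fin 2) (Fin 2) ℂ)).re ^ 2 +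
        (Matrix.trace (a₂ : Matrix (Fin 2) (Fin 2) ℂ)).re ^ 2 +
        (Matrix.trace (a₃ : Matrix (Fin 2) (Fin 2) ℂ)).re ^ 2 -
        (Matrix.trace (a₁ : Matrix (Fin 2) (Fin 2) ℂ)).re *
          (Matrix.trace (a₂ : Matrix (Fin 2) (Fin 2) ℂ)).re *
          (Matrix.trace (a₃ : Matrix (Fin 2) (Fin 2) ℂ)).re ≤ 4 := by
  have h_trace : (a₁ * a₂).1.trace = a₃.1.trace := by
    rw [eq_inv_of_mul_eq_one_left h, trace_inv_specialUnitaryGroup_fin_two]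
  have h_le_four := sum_re_trace_sq_sub_prod_re_trace_le_four a₁ a₂
  simp only [h_trace, RCLike.re_eq_complex_re] at h_le_four
  refine ⟨?_, h_le_four⟩
  simp only [cos_rotationAngle_div_two]
  linarith
end

section
/- Let a₀, a₁, a₂, a₃ be four matrices in SU(2) satisfying a₁·a₂·a₃ = a₀. Then θ(a₁) + θ(a₂) + θ(a₃) ≥ θ(a₀). -/
/-!
A state `f` on a C⋆-algebra maps unitaries to unit vectors of its GNS space, where the real angle
between `u` and `v` is `arccos (Re f(u⋆v))`. The spherical triangle inequality for `u⋆`, `1` and `v`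
therefore bounds `arccos (Re f(uv))` by `arccos (Re f(u)) + arccos (Re f(v))`. For the normalized
trace on `2 × 2` matrices, `arccos (Re f(-a))` is half the rotation angle of `a`, and
`-(a₁ a₂ a₃) = (-a₁) (-a₂) (-a₃)` because the number of factors is odd.
-/

open scoped ComplexOrder

section State

variable {A : Type*} [CStarAlgebra A] [PartialOrder A]

/-- The real angle between the vectors of `a` and `1` in the GNS space of `f`. The formula omits the
division by their norms: it is meant for a state `f` and a unitary `a`, where both norms are `1`. -/
noncomputable def stateAngle (f : A →ₚ[ℂ] ℂ) (a : A) : ℝ :=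
  Real.arccos (f a).re

variable [StarOrderedRing A]

/-- The vector of the GNS space of `f` represented by the element `a` of the algebra. -/
noncomputable def gnsVector (f : A →ₚ[ℂ] ℂ) (a : A) : f.GNS :=
  (f.toPreGNS a : f.PreGNS)

theorem inner_gnsVector (f : A →ₚ[ℂ] ℂ) (a b : A) :
    inner ℂ (gnsVector f a) (gnsVector f b) = f (star a * b) := by
  simp [gnsVector, UniformSpace.Completion.inner_coe, PositiveLinearMap.preGNS_inner_def]

noncomputable local instance gnsRealInnerProductSpace (f : A →ₚ[ℂ] ℂ) :
    InnerProductSpace ℝ f.GNS :=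
  .complexToReal

variable {f : A →ₚ[ℂ] ℂ}

theorem norm_gnsVector_unitary (hf : f 1 = 1) (u : unitary A) : ‖gnsVector f u‖ = 1 := by
  simp [gnsVector, PositiveLinearMap.preGNS_norm_def, hf]

theorem angle_gnsVector_unitary (hf : f 1 = 1) (u v : unitary A) :
    InnerProductGeometry.angle (gnsVector f u) (gnsVector f v) = stateAngle f (star u * v) := by
  simp [InnerProductGeometry.angle, stateAngle, norm_gnsVector_unitary hf,
    real_inner_eq_re_inner ℂ, inner_gnsVector]

theorem stateAngle_mul_le (hf : f 1 = 1) (u v : unitary A) :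
    stateAngle f (u * v) ≤ stateAngle f u + stateAngle f v := by
  have triangle := InnerProductGeometry.angle_le_angle_add_angle
    (gnsVector f (star u : unitary A)) (gnsVector f (1 : unitary A)) (gnsVector f v)
  simp only [angle_gnsVector_unitary hf] at triangle
  simpa using triangle

theorem su2_rotation_angle_triangle_inequality_general (hf : f 1 = 1) (u v w : unitary A) :
    stateAngle f (-(u * v * w)) ≤ stateAngle f (-u) + stateAngle f (-v) + stateAngle f (-w) :=
  calc
    stateAngle f (-(u * v * w)) = stateAngle f ((-u * -v : unitary A) * (-w : unitary A)) := by
      simp [Unitary.coe_neg]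
    _ ≤ stateAngle f ((-u : unitary A) * (-v : unitary A)) + stateAngle f (-w) :=
      stateAngle_mul_le hf (-u * -v) (-w)
    _ ≤ stateAngle f (-u) + stateAngle f (-v) + stateAngle f (-w) := by
      gcongr
      exact stateAngle_mul_le hf (-u) (-v)

end State

section Matrix

open scoped MatrixOrder Matrix.Norms.L2Operator

variable (n : Type*) [Fintype n]

/-- The normalized trace as a positive functional on matrices. It is a state when `n` is nonempty,
and it is `0` otherwise. -/
noncomputable def normalizedTrace : Matrix n n ℂ →ₚ[ℂ] ℂ :=
  .mk₀ ((Fintype.card n : ℂ)⁻¹ • Matrix.traceLinearMap n ℂ ℂ) fun a (ha : 0 ≤ a) ↦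
    mul_nonneg (by simp) (Matrix.nonneg_iff_posSemidef.mp ha).trace_nonneg

variable {n}

theorem normalizedTrace_apply (a : Matrix n n ℂ) :
    normalizedTrace n a = (Fintype.card n : ℂ)⁻¹ * a.trace :=
  rfl

theorem normalizedTrace_one [DecidableEq n] [Nonempty n] : normalizedTrace n 1 = 1 := by
  simp [normalizedTrace_apply]

theorem rotationAngle_eq_two_mul_stateAngle (a : Matrix.specialUnitaryGroup (Fin 2) ℂ) :
    rotationAngle a = 2 * stateAngle (normalizedTrace (Fin 2)) (-a) := by
  simp [rotationAngle, stateAngle, normalizedTrace_apply, div_eq_inv_mul]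

end Matrix

theorem su2_rotation_angle_triangle_inequality
    (a₀ a₁ a₂ a₃ : Matrix.specialUnitaryGroup (Fin 2) ℂ)
    (h : a₁ * a₂ * a₃ = a₀) :
    rotationAngle a₁ + rotationAngle a₂ + rotationAngle a₃ ≥ rotationAngle a₀ := by
  open scoped MatrixOrder Matrix.Norms.L2Operator in
  have triangle := su2_rotation_angle_triangle_inequality_general (normalizedTrace_one (n := Fin 2))
    ⟨a₁, a₁.2.1⟩ ⟨a₂, a₂.2.1⟩ ⟨a₃, a₃.2.1⟩
  simp only [← h, rotationAngle_eq_two_mul_stateAngle, Submonoid.coe_mul]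
  linarith
end

section
/- Let m be a positive integer and let a₁, …, a_{2m+1} be matrices in SU(2) satisfying a₁·a₂·⋯·a_{2m+1} = id. Then θ(a₁) + θ(a₂) + ⋯ + θ(a_{2m+1}) ≥ 2π. In particular, for any odd number of matrices in SU(2) whose product is the identity, the sum of their rotation angles is at least 2π. -/
/-!
A group of isometries of a real inner product space moves a nonzero vector `v` by an angle that is
subadditive along products, by the triangle inequality for angles and invariance. Let the unitary
matrices act by left multiplication on all square matrices with the Frobenius inner product and
take `v = 1`: the angle between `1` and `u` has cosine `Re (tr u) / n`, so half of `θ(a)` is the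
angle by which `-a` moves `1`. An odd number of matrices `aⱼ` with product `1` gives matrices `-aⱼ`
with product `-1`, which moves `1` by the angle `π`.
-/

open InnerProductGeometry
open scoped ComplexOrder Matrix

section IsometricAction

variable {G E : Type*} [Monoid G] [NormedAddCommGroup E] [DistribMulAction G E]
  [IsIsometricSMul G E]

theorem norm_smul_of_isIsometricSMul (g : G) (x : E) : ‖g • x‖ = ‖x‖ := by
  simpa only [smul_zero, dist_zero_right] using dist_smul g x 0

variable [InnerProductSpace ℝ E]

-- The action need not be `ℝ`-linear: polarization expresses the angle by norms of differences.
theorem angle_smul_smul_of_isIsometricSMul (g : G) (x y : E) :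
    angle (g • x) (g • y) = angle x y := by
  simp only [angle, real_inner_eq_norm_mul_self_add_norm_mul_self_sub_norm_sub_mul_self_div_two,
    ← smul_sub, norm_smul_of_isIsometricSMul]

theorem angle_list_prod_smul_le {v : E} (hv : v ≠ 0) (l : List G) :
    angle v (l.prod • v) ≤ (l.map fun g ↦ angle v (g • v)).sum := by
  induction l with
  | nil => simp [angle_self hv]
  | cons g l ih =>
    calc angle v ((g :: l).prod • v)
        = angle v (g • l.prod • v) := by rw [List.prod_cons, mul_smul]
      _ ≤ angle v (g • v) + angle (g • v) (g • l.prod • v) := angle_le_angle_add_angle _ _ _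
      _ = angle v (g • v) + angle v (l.prod • v) := by rw [angle_smul_smul_of_isIsometricSMul]
      _ ≤ angle v (g • v) + (l.map fun g ↦ angle v (g • v)).sum := by gcongr
      _ = ((g :: l).map fun g ↦ angle v (g • v)).sum := by rw [List.map_cons, List.sum_cons]

end IsometricAction

section UnitaryGroup

variable {n 𝕜 : Type*} [Fintype n] [DecidableEq n] [RCLike 𝕜]

/-- The Frobenius norm on square matrices, in the form that underlies the inner product
`frobeniusInnerProductSpace`. -/
noncomputable abbrev frobeniusNormedAddCommGroup : NormedAddCommGroup (Matrix n n 𝕜) :=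
  Matrix.toMatrixNormedAddCommGroup 1 Matrix.PosDef.one

attribute [local instance] frobeniusNormedAddCommGroup

/-- The real Frobenius inner product `⟪x, y⟫ = Re (tr (y xᴴ))` on square matrices over `ℝ` or `ℂ`,
whose angles measure how far a unitary matrix is from the identity. -/
noncomputable abbrev frobeniusInnerProductSpace : InnerProductSpace ℝ (Matrix n n 𝕜) :=
  letI := Matrix.toMatrixInnerProductSpace (1 : Matrix n n 𝕜) Matrix.PosSemidef.one
  InnerProductSpace.rclikeToReal 𝕜 (Matrix n n 𝕜)

attribute [local instance] frobeniusInnerProductSpace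

theorem frobenius_inner_eq_re_trace (x y : Matrix n n 𝕜) :
    inner ℝ x y = RCLike.re (y * xᴴ).trace :=
  congrArg (fun z ↦ RCLike.re (z * xᴴ).trace) (mul_one y)

theorem frobenius_inner_unitary_mul_mul (u : Matrix.unitaryGroup n 𝕜) (x y : Matrix n n 𝕜) :
    inner ℝ (u * x) (u * y) = inner ℝ x y := by
  have star_mul_self : (u : Matrix n n 𝕜)ᴴ * u = 1 := Unitary.coe_star_mul_self u
  simp only [frobenius_inner_eq_re_trace]
  congr 1
  calc ((u * y) * (u * x : Matrix n n 𝕜)ᴴ).trace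
      = (u * (y * xᴴ) * (u : Matrix n n 𝕜)ᴴ).trace := by
        rw [Matrix.conjTranspose_mul, ← mul_assoc, mul_assoc (u : Matrix n n 𝕜) y]
    _ = (y * xᴴ).trace := by rw [Matrix.trace_mul_comm, ← mul_assoc, star_mul_self, one_mul]

theorem frobenius_norm_unitary_mul (u : Matrix.unitaryGroup n 𝕜) (x : Matrix n n 𝕜) :
    ‖(u : Matrix n n 𝕜) * x‖ = ‖x‖ := by
  simp only [norm_eq_sqrt_real_inner, frobenius_inner_unitary_mul_mul]

local instance isIsometricSMul_unitaryGroup :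
    IsIsometricSMul (Matrix.unitaryGroup n 𝕜) (Matrix n n 𝕜) where
  isometry_smul u :=
    AddMonoidHomClass.isometry_of_norm (DistribSMul.toAddMonoidHom _ u)
      (frobenius_norm_unitary_mul u)

theorem frobenius_norm_unitary (u : Matrix.unitaryGroup n 𝕜) :
    ‖(u : Matrix n n 𝕜)‖ = √(Fintype.card n) := by
  have mul_star_self : (u : Matrix n n 𝕜) * (u : Matrix n n 𝕜)ᴴ = 1 := Unitary.coe_mul_star_self u
  rw [norm_eq_sqrt_real_inner, frobenius_inner_eq_re_trace, mul_star_self, Matrix.trace_one,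
    RCLike.natCast_re]

theorem angle_one_unitary (u : Matrix.unitaryGroup n 𝕜) :
    angle 1 (u : Matrix n n 𝕜) =
      Real.arccos (RCLike.re (u : Matrix n n 𝕜).trace / Fintype.card n) := by
  have frobenius_norm_one : ‖(1 : Matrix n n 𝕜)‖ = √(Fintype.card n) := frobenius_norm_unitary 1
  rw [angle, frobenius_inner_eq_re_trace, Matrix.conjTranspose_one, mul_one,
    frobenius_norm_one, frobenius_norm_unitary, Real.mul_self_sqrt (Nat.cast_nonneg _)]

theorem angle_one_list_prod_unitary_le [Nonempty n] (l : List (Matrix.unitaryGroup n 𝕜)) :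
    angle (1 : Matrix n n 𝕜) l.prod ≤
      (l.map fun u : Matrix.unitaryGroup n 𝕜 ↦ angle (1 : Matrix n n 𝕜) u).sum := by
  simpa only [Submonoid.smul_def, smul_eq_mul, mul_one] using
    angle_list_prod_smul_le (one_ne_zero (α := Matrix n n 𝕜)) l

theorem su2_odd_product_rotation_angles_general [Nonempty n] {k : ℕ} (hk : Odd k)
    (u : Fin k → Matrix.unitaryGroup n 𝕜) (h : (List.ofFn u).prod = 1) :
    2 * Real.pi ≤
      ∑ j, 2 * Real.arccos (-RCLike.re (u j : Matrix n n 𝕜).trace / Fintype.card n) := by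
  have prod_neg : (List.ofFn fun j ↦ -u j).prod = -1 := by
    have ofFn_neg : (List.ofFn fun j ↦ -u j) = (List.ofFn u).map Neg.neg :=
      List.map_ofFn.symm
    rw [ofFn_neg, List.prod_map_neg, List.length_ofFn, hk.neg_one_pow, h, mul_one]
  have angle_neg (j : Fin k) : angle (1 : Matrix n n 𝕜) ↑(-u j) =
      Real.arccos (-RCLike.re (u j : Matrix n n 𝕜).trace / Fintype.card n) := by
    rw [angle_one_unitary, Unitary.coe_neg, Matrix.trace_neg, map_neg]
  have subadditive := angle_one_list_prod_unitary_le (List.ofFn fun j ↦ -u j)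
  rw [prod_neg, Unitary.coe_neg, OneMemClass.coe_one, angle_self_neg_of_nonzero one_ne_zero,
    List.map_ofFn, List.sum_ofFn] at subadditive
  simp only [Function.comp_apply, angle_neg] at subadditive
  rw [← Finset.mul_sum]
  gcongr

end UnitaryGroup

theorem su2_odd_product_rotation_angles
    (m : ℕ) (hm : 0 < m)
    (a : Fin (2 * m + 1) → Matrix.specialUnitaryGroup (Fin 2) ℂ)
    (h : (List.ofFn a).prod = 1) :
    2 * Real.pi ≤ ∑ j : Fin (2 * m + 1), rotationAngle (a j) := by
  simpa [rotationAngle] using su2_odd_product_rotation_angles_general (odd_two_mul_add_one m)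
    (Submonoid.inclusion Matrix.specialUnitaryGroup_le_unitaryGroup ∘ a)
    (by rw [← List.map_ofFn, ← map_list_prod, h, map_one])
end

section
/- Let a(z) and b(z) be relatively prime polynomials with complex coefficients such that b(0) ≠ 0, b(1) ≠ 0, and deg b ≥ 1, and let μ₁, μ₂ be complex numbers. Define the polynomial f(z) := −(1+μ₁)·(z−1)·a(z)·b(z) − (1+μ₂)·z·a(z)·b(z) + z·(z−1)·(a'(z)·b(z) − a(z)·b'(z)), where a' and b' denote the derivatives of a and b. Then b(z) does not divide f(z) in the polynomial ring ℂ[z]. -/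
open Polynomial

/-!
Modulo `b`, the polynomial `f` is `-z (z - 1) a b'`. Since `z`, `z - 1` and `a` are all coprime to
`b`, divisibility of `f` by `b` would force `b ∣ b'`, which a nonzero derivative excludes by degree.
-/

section CommRing

variable {R : Type*} [CommRing R] {a b : R[X]}

theorem isCoprime_X_sub_C_iff_isUnit_eval {c : R} :
    IsCoprime (X - C c) b ↔ IsUnit (b.eval c) := by
  obtain ⟨q, hq⟩ : X - C c ∣ b - C (b.eval c) := X_sub_C_dvd_sub_C_eval
  constructor
  · intro h
    simpa [isCoprime_zero_left] using h.map (evalRingHom c)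
  · intro h
    rw [sub_eq_iff_eq_add.1 hq, IsCoprime.mul_add_left_right_iff]
    exact isCoprime_one_right.of_isCoprime_of_dvd_right (isUnit_C.2 h).dvd

theorem dvd_wronskian_iff_dvd_derivative (hab : IsCoprime a b) :
    b ∣ wronskian b a ↔ b ∣ derivative b := by
  rw [wronskian, dvd_sub_right (dvd_mul_right b _)]
  exact ⟨hab.symm.dvd_of_dvd_mul_right, (·.mul_right a)⟩

theorem not_dvd_f_general [NoZeroDivisors R] (hab : IsCoprime a b) (hb : derivative b ≠ 0)
    {p : R[X]} (hp : IsCoprime p b) (g : R[X]) :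
    ¬ b ∣ g * b + p * wronskian b a := by
  intro h
  have hw : b ∣ wronskian b a :=
    hp.symm.dvd_of_dvd_mul_left ((dvd_add_right (dvd_mul_left b g)).1 h)
  exact hb (dvd_derivative_iff.1 ((dvd_wronskian_iff_dvd_derivative hab).1 hw))

end CommRing

theorem not_dvd_f (a b : Polynomial ℂ) (hab : IsCoprime a b)
    (hb0 : b.eval 0 ≠ 0) (hb1 : b.eval 1 ≠ 0) (hdeg : 1 ≤ b.natDegree)
    (μ₁ μ₂ : ℂ) :
    ¬ b ∣ (-(C (1 + μ₁)) * ((X - 1) * a * b) - C (1 + μ₂) * (X * a * b) +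
        X * (X - 1) * (derivative a * b - a * derivative b)) := by
  have hp : IsCoprime ((X - C 0) * (X - C 1)) b :=
    .mul_left (isCoprime_X_sub_C_iff_isUnit_eval.2 hb0.isUnit)
      (isCoprime_X_sub_C_iff_isUnit_eval.2 hb1.isUnit)
  convert not_dvd_f_general hab (derivative_ne_zero.2 (by lia)) hp
    (-(C (1 + μ₁)) * (X - 1) * a - C (1 + μ₂) * X * a) using 2
  rw [wronskian, C_0, C_1]
  ring
end
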